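/- For every function f : ℤ → ℤ and every n : ℕ, f is a polynomial map of degree ≤ n if and only if there exist integers c_0, c_1, …, c_n such that f(x) = Σ_{k=0}^{n} c_k · (x choose k) for all x ∈ ℤ, where (x choose k) denotes the integer binomial coefficient x(x−1)⋯(x−k+1)/k! of x ∈ ℤ; moreover the integers c_0, …, c_n are uniquely determined by f. In other words, the ring of polynomial maps ℤ → ℤ is the free abelian group on the binomial coefficient functions. -/

import Mathlib

/-- The difference operator: `(D_a f)(x) = f (a + x) - f x`. -/
def DOp {A B : Type*} [AddCommGroup A] [AddCommGroup B] (a : A) (f : A → B) : A → B :=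
  fun x => f (a + x) - f x

/-- `f : A → B` is a polynomial map of degree `≤ n`. -/
def IsPolyDeg {A B : Type*} [AddCommGroup A] [AddCommGroup B] : ℕ → (A → B) → Prop
  | 0 => fun f => ∀ a x, DOp a f x = 0
  | n + 1 => fun f => ∀ a, IsPolyDeg n (DOp a f)

theorem IsPolyDeg.add' {n : ℕ} : ∀ {f g : ℤ → ℤ}, IsPolyDeg n f → IsPolyDeg n g →
    IsPolyDeg n (fun x => f x + g x) := by
  induction n with
  | zero =>
    intro f g hf hg a x
    have h1 := hf a x
    have h2 := hg a x
    simp only [DOp] at *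
    linarith
  | succ n ih =>
    intro f g hf hg a
    have := ih (hf a) (hg a)
    convert this using 1
    funext x
    simp only [DOp]
    ring

theorem IsPolyDeg.neg' {n : ℕ} : ∀ {f : ℤ → ℤ}, IsPolyDeg n f →
    IsPolyDeg n (fun x => - f x) := by
  induction n with
  | zero =>
    intro f hf a x
    have h1 := hf a x
    simp only [DOp] at *
    linarith
  | succ n ih =>
    intro f hf a
    have := ih (hf a)
    convert this using 1
    funext x
    simp only [DOp]
    ring

theorem IsPolyDeg.shift' {n : ℕ} (b : ℤ) : ∀ {f : ℤ → ℤ}, IsPolyDeg n f →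
    IsPolyDeg n (fun x => f (x + b)) := by
  induction n with
  | zero =>
    intro f hf a x
    have h1 := hf a (x + b)
    simp only [DOp, add_assoc] at *
    exact h1
  | succ n ih =>
    intro f hf a
    have := ih (hf a)
    convert this using 1
    funext x
    simp only [DOp, add_assoc]

theorem IsPolyDeg.of_one {n : ℕ} {f : ℤ → ℤ} (h : IsPolyDeg n (DOp 1 f)) :
    IsPolyDeg (n + 1) f := by
  have key : ∀ a : ℤ, IsPolyDeg n (DOp a f) := by
    intro a
    induction a using Int.induction_on with
    | zero =>
      convert h.add' h.neg' using 1
      funext x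
      simp [DOp]
    | succ i ih =>
      convert (ih.shift' 1).add' h using 1
      funext x
      simp only [DOp]
      rw [show (i : ℤ) + 1 + x = i + (x + 1) by ring, add_comm 1 x]
      ring
    | pred i ih =>
      convert (ih.shift' (-1)).add' (h.shift' (-1)).neg' using 1
      funext x
      simp only [DOp]
      rw [show -(i : ℤ) - 1 + x = -i + (x + -1) by ring, show 1 + (x + -1) = x by ring]
      ring_nf
  exact key

theorem choose_D (x : ℤ) (k : ℕ) :
    Ring.choose (1 + x) (k + 1) = Ring.choose x k + Ring.choose x (k + 1) := by
  rw [add_comm 1 x]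
  exact Ring.choose_succ_succ x k

theorem sum_D {n : ℕ} (c : Fin (n + 2) → ℤ) (x : ℤ) :
    (∑ k : Fin (n + 2), c k * Ring.choose (1 + x) (k : ℕ))
      - (∑ k : Fin (n + 2), c k * Ring.choose x (k : ℕ))
    = ∑ k : Fin (n + 1), c k.succ * Ring.choose x (k : ℕ) := by
  rw [Fin.sum_univ_succ, Fin.sum_univ_succ (n := n + 1)]
  simp only [Fin.val_zero, Ring.choose_zero_right, Fin.val_succ, choose_D, mul_add,
    Finset.sum_add_distrib]
  ring

theorem sum_zero' {n : ℕ} (c : Fin (n + 1) → ℤ) :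
    (∑ k : Fin (n + 1), c k * Ring.choose (0 : ℤ) (k : ℕ)) = c 0 := by
  rw [Fin.sum_univ_succ]
  simp [Ring.choose_zero_right, Ring.choose_zero_succ]

theorem const_of_D {f : ℤ → ℤ} (h : ∀ x, f (1 + x) = f x) (x : ℤ) : f x = f 0 := by
  induction x using Int.induction_on with
  | zero => rfl
  | succ i ih => rw [add_comm, h, ih]
  | pred i ih => rw [← ih, ← h (-(i : ℤ) - 1)]; congr 1; ring

theorem uniq' {n : ℕ} : ∀ (c d : Fin (n + 1) → ℤ),
    (∀ x : ℤ, ∑ k : Fin (n + 1), c k * Ring.choose x (k : ℕ)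
      = ∑ k : Fin (n + 1), d k * Ring.choose x (k : ℕ)) → c = d := by
  induction n with
  | zero =>
    intro c d h
    have h0 := h 0
    rw [sum_zero', sum_zero'] at h0
    funext i
    rw [Fin.fin_one_eq_zero i, h0]
  | succ n ih =>
    intro c d h
    have h0 := h 0
    rw [sum_zero', sum_zero'] at h0
    have := ih (fun k => c k.succ) (fun k => d k.succ) (fun x => by
      rw [← sum_D, ← sum_D, h, h])
    funext i
    refine Fin.cases h0 (fun j => congrFun this j) i

theorem exists' {n : ℕ} : ∀ {f : ℤ → ℤ}, IsPolyDeg n f → ∃ c : Fin (n + 1) → ℤ,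
    ∀ x : ℤ, f x = ∑ k : Fin (n + 1), c k * Ring.choose x (k : ℕ) := by
  induction n with
  | zero =>
    intro f hf
    refine ⟨fun _ => f 0, fun x => ?_⟩
    have := const_of_D (f := f) (fun x => sub_eq_zero.1 (hf 1 x)) x
    simp [Ring.choose_zero_right, this]
  | succ n ih =>
    intro f hf
    obtain ⟨c, hc⟩ := ih (hf 1)
    refine ⟨Fin.cons (f 0) c, fun x => ?_⟩
    have := const_of_D (f := fun x => f x - ∑ k : Fin (n + 2),
      (Fin.cons (f 0) c : Fin (n + 2) → ℤ) k * Ring.choose x (k : ℕ)) (fun x => by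
        have h1 := sum_D (Fin.cons (f 0) c : Fin (n + 2) → ℤ) x
        have h2 := hc x
        simp only [Fin.cons_succ] at h1
        simp only [DOp] at h2
        linarith) x
    simp only [sum_zero', Fin.cons_zero] at this
    linarith

theorem poly' {n : ℕ} : ∀ {f : ℤ → ℤ} (c : Fin (n + 1) → ℤ),
    (∀ x : ℤ, f x = ∑ k : Fin (n + 1), c k * Ring.choose x (k : ℕ)) → IsPolyDeg n f := by
  induction n with
  | zero =>
    intro f c h a x
    simp [DOp, h, Ring.choose_zero_right]
  | succ n ih =>
    intro f c h
    apply IsPolyDeg.of_one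
    refine ih (fun k => c k.succ) (fun x => ?_)
    rw [← sum_D, ← h, ← h]
    rfl

/-- A function `f : ℤ → ℤ` is a polynomial map of degree `≤ n` iff it is a (unique)
integral linear combination `f x = ∑_{k=0}^{n} c_k * (x choose k)` of the binomial
coefficient functions. -/
theorem isPolyDeg_int_iff_binomial (f : ℤ → ℤ) (n : ℕ) :
    IsPolyDeg n f ↔ ∃! c : Fin (n + 1) → ℤ,
      ∀ x : ℤ, f x = ∑ k : Fin (n + 1), c k * Ring.choose x (k : ℕ) := by
  constructor
  · intro h
    obtain ⟨c, hc⟩ := exists' h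
    exact ⟨c, hc, fun d hd => uniq' d c (fun x => by rw [← hd, ← hc])⟩
  · rintro ⟨c, hc, -⟩
    exact poly' c hc
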